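/- Let ρ be a binary constant-length substitution of length L ≥ 2 with Fourier matrix B(k), and suppose the polynomials Q and R are not equal. Then for Lebesgue-almost every k ∈ ℝ both Lyapunov exponents of the outward cocycle are strictly positive; in particular log√L − lim_{n→∞} (1/n)·log‖B(k)·B(Lk)···B(L^{n−1}k)‖ > 0. -/

import Mathlib

open Filter Polynomial

noncomputable section

/-- `e k = exp(2πik)`, the point on the unit circle with angle `2πk`. -/
def e (k : ℝ) : ℂ := Complex.exp (2 * Real.pi * Complex.I * k)

/-- Coincidence positions of type `a` (letter `a` encoded as `0`, `b` as `1`). -/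
def Ca {L : ℕ} (wa wb : Fin L → Fin 2) : Finset (Fin L) :=
  Finset.univ.filter fun i => wa i = 0 ∧ wb i = 0

/-- Coincidence positions of type `b`. -/
def Cb {L : ℕ} (wa wb : Fin L → Fin 2) : Finset (Fin L) :=
  Finset.univ.filter fun i => wa i = 1 ∧ wb i = 1

/-- Bijective positions where `(w_a)_i = a` and `(w_b)_i = b`. -/
def Pa {L : ℕ} (wa wb : Fin L → Fin 2) : Finset (Fin L) :=
  Finset.univ.filter fun i => wa i = 0 ∧ wb i = 1

/-- Bijective positions where `(w_a)_i = b` and `(w_b)_i = a`. -/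
def Pb {L : ℕ} (wa wb : Fin L → Fin 2) : Finset (Fin L) :=
  Finset.univ.filter fun i => wa i = 1 ∧ wb i = 0

/-- The polynomial `∑_{z ∈ S} X^z` associated with a set of positions. -/
def posPoly {L : ℕ} (S : Finset (Fin L)) : Polynomial ℂ :=
  ∑ z ∈ S, Polynomial.X ^ (z : ℕ)

/-- The Fourier matrix `B(k)` of the substitution determined by `wa, wb`. -/
def FourierB {L : ℕ} (wa wb : Fin L → Fin 2) (k : ℝ) : Matrix (Fin 2) (Fin 2) ℂ :=
  !![(posPoly (Ca wa wb) + posPoly (Pa wa wb)).eval (e k),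
     (posPoly (Ca wa wb) + posPoly (Pb wa wb)).eval (e k);
     (posPoly (Cb wa wb) + posPoly (Pb wa wb)).eval (e k),
     (posPoly (Cb wa wb) + posPoly (Pa wa wb)).eval (e k)]

/-- The logarithmic Mahler measure `m(f) = ∫₀¹ log |f(e^{2πik})| dk`. -/
def logMahler (f : Polynomial ℂ) : ℝ :=
  ∫ k in (0:ℝ)..1, Real.log ‖f.eval (e k)‖

/-- The operator norm of a matrix, induced by the Euclidean norm on `ℂ²`. -/
def opNorm (M : Matrix (Fin 2) (Fin 2) ℂ) : ℝ :=
  ‖Matrix.toEuclideanCLM (𝕜 := ℂ) M‖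

/-- The (forward) matrix product `B(k) · B(Lk) ⋯ B(L^{n-1}k)` of the outward cocycle. -/
def cocycleProd {L : ℕ} (wa wb : Fin L → Fin 2) (k : ℝ) (n : ℕ) :
    Matrix (Fin 2) (Fin 2) ℂ :=
  (((List.range n).map fun m => FourierB wa wb ((L : ℝ) ^ m * k))).prod

/-!
The vector `(1, 1)` is a left eigenvector and `(1, -1)` a right eigenvector of every Fourier matrix
`B(k)`, with eigenvalues `s(e k)` and `q(e k)`, where `s = 1 + X + ⋯ + X ^ (L - 1)` and `q = Q - R`.
So the cocycle is simultaneously triangular, and its growth is governed by the two diagonal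
products. Birkhoff's theorem for the ergodic map `x ↦ L x` on the circle identifies their
exponential rates with the logarithmic Mahler measures `m(s) = 0` and `m(q)`. The off-diagonal entry
grows at a rate of at most `max 0 (m(q))`, so the cocycle has exponent `max 0 (m(q))`, and its
inverse has exponent `max 0 (-m(q))`. Since `q` has degree less than `L` and coefficients in
`{-1, 0, 1}`, Landau's inequality gives `m(q) ≤ log ‖q‖₂ ≤ log √L`. By the equality case of Jensen's
inequality, the first bound is strict unless `|q|` is constant on the circle; then `q` is a
monomial, and `m(q) = 0 < log √L`.
-/

section BirkhoffErgodicTheorem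

open MeasureTheory
open scoped Topology

variable {α : Type*} {T : α → α} {f : α → ℝ}

theorem partialSups_birkhoffSum_succ (T : α → α) (f : α → ℝ) (n : ℕ) :
    partialSups (birkhoffSum T f) (n + 1) = 0 ⊔ (f + partialSups (birkhoffSum T f) n ∘ T) := by
  have birkhoffSum_succ_eq (n : ℕ) : birkhoffSum T f (n + 1) = f + birkhoffSum T f n ∘ T :=
    funext (birkhoffSum_succ' T f n)
  induction n with
  | zero => rw [partialSups_add_one, partialSups_zero, birkhoffSum_succ_eq, birkhoffSum_zero']
  | succ n ih =>
    calc partialSups (birkhoffSum T f) (n + 1 + 1)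
      _ = 0 ⊔ ((f + partialSups (birkhoffSum T f) n ∘ T) ⊔
            (f + birkhoffSum T f (n + 1) ∘ T)) := by
        rw [partialSups_add_one, ih, birkhoffSum_succ_eq, sup_assoc]
      _ = 0 ⊔ (f + partialSups (birkhoffSum T f) (n + 1) ∘ T) := by
        rw [← add_sup, partialSups_add_one]
        rfl

theorem zero_le_partialSups_birkhoffSum (T : α → α) (f : α → ℝ) (n : ℕ) :
    0 ≤ partialSups (birkhoffSum T f) n :=
  le_partialSups_of_le (birkhoffSum T f) n.zero_le

theorem bddAbove_range_birkhoffSum_apply_iff (T : α → α) (f : α → ℝ) (x : α) :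
    BddAbove (Set.range fun n => birkhoffSum T f n (T x)) ↔
      BddAbove (Set.range fun n => birkhoffSum T f n x) := by
  constructor
  · rintro ⟨c, hc⟩
    refine ⟨max 0 (f x + c), Set.forall_mem_range.2 fun n => ?_⟩
    cases n with
    | zero => exact le_max_left _ _
    | succ n =>
      have hcn : birkhoffSum T f n (T x) ≤ c := hc ⟨n, rfl⟩
      exact le_max_of_le_right ((birkhoffSum_succ' T f n x).trans_le (by gcongr))
  · rintro ⟨c, hc⟩
    refine ⟨c - f x, Set.forall_mem_range.2 fun n => ?_⟩
    have hcn : birkhoffSum T f (n + 1) x ≤ c := hc ⟨n + 1, rfl⟩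
    rw [birkhoffSum_succ'] at hcn
    linarith

variable [MeasurableSpace α] {μ : Measure α}

theorem integrable_birkhoffSum (hT : MeasurePreserving T μ μ) (hf : Integrable f μ) (n : ℕ) :
    Integrable (birkhoffSum T f n) μ :=
  integrable_finsetSum _ fun k _ => (hT.iterate k).integrable_comp_of_integrable hf

theorem integrable_partialSups_birkhoffSum (hT : MeasurePreserving T μ μ) (hf : Integrable f μ)
    (n : ℕ) : Integrable (partialSups (birkhoffSum T f) n) μ := by
  induction n with
  | zero => exact integrable_birkhoffSum hT hf 0
  | succ n ih =>
    rw [partialSups_add_one]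
    exact ih.sup (integrable_birkhoffSum hT hf (n + 1))

/- With `Mₙ = max (S₀ f, …, Sₙ f)`, the recursion `Mₙ₊₁ = max (0, f + Mₙ ∘ T)` gives
`max (-Mₙ ∘ T) f = Mₙ₊₁ - Mₙ ∘ T`. -/
theorem integral_sup_neg_partialSups_birkhoffSum_nonneg (hT : MeasurePreserving T μ μ)
    (hf : Integrable f μ) (n : ℕ) :
    0 ≤ ∫ x, max (-partialSups (birkhoffSum T f) n (T x)) (f x) ∂μ := by
  set M := partialSups (birkhoffSum T f)
  have hM := integrable_partialSups_birkhoffSum hT hf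
  have hMT : Integrable (fun x => M n (T x)) μ := hT.integrable_comp_of_integrable (hM n)
  have max_eq (x : α) : max (-M n (T x)) (f x) = M (n + 1) x - M n (T x) := by
    rw [partialSups_birkhoffSum_succ]
    simp only [Pi.sup_apply, Pi.zero_apply, Pi.add_apply, Function.comp_apply]
    rw [← max_sub_sub_right, zero_sub, add_sub_cancel_right]
  have integral_comp : ∫ x, M n (T x) ∂μ = ∫ x, M n x ∂μ := by
    conv_rhs => rw [← hT.map_eq]
    exact (integral_map hT.aemeasurable (by rw [hT.map_eq]; exact (hM n).1)).symm
  simp_rw [max_eq]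
  rw [integral_sub (hM _) hMT, integral_comp, sub_nonneg]
  exact integral_mono (hM _) (hM _) (partialSups_monotone (birkhoffSum T f) n.le_succ)

theorem integral_nonneg_of_ae_not_bddAbove_birkhoffSum (hT : MeasurePreserving T μ μ)
    (hf : Integrable f μ)
    (h : ∀ᵐ x ∂μ, ¬ BddAbove (Set.range fun n => birkhoffSum T f n x)) : 0 ≤ ∫ x, f x ∂μ := by
  set M := partialSups (birkhoffSum T f)
  have hM := integrable_partialSups_birkhoffSum hT hf
  suffices Tendsto (fun n => ∫ x, max (-M n (T x)) (f x) ∂μ) atTop (𝓝 (∫ x, f x ∂μ)) from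
    ge_of_tendsto' this (integral_sup_neg_partialSups_birkhoffSum_nonneg hT hf)
  refine tendsto_integral_of_dominated_convergence (fun x => |f x|)
    (fun n => ((hT.integrable_comp_of_integrable (hM n)).neg.sup hf).1) hf.abs
    (fun n => ae_of_all _ fun x => ?_) ?_
  · have hMn : 0 ≤ M n (T x) := zero_le_partialSups_birkhoffSum T f n (T x)
    exact abs_le.2 ⟨(neg_abs_le _).trans (le_max_right _ _),
      max_le (by linarith [abs_nonneg (f x)]) (le_abs_self _)⟩
  · filter_upwards [h] with x hx
    have tendsto_atTop : Tendsto (fun n => M n (T x)) atTop atTop := by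
      refine tendsto_atTop_atTop_of_monotone'
        (fun m n hmn => partialSups_monotone (birkhoffSum T f) hmn _) ?_
      simp only [M, Pi.partialSups_apply, bddAbove_range_partialSups]
      rwa [bddAbove_range_birkhoffSum_apply_iff]
    refine tendsto_const_nhds.congr' ?_
    filter_upwards [tendsto_atTop.eventually_ge_atTop (-f x)] with n hn
    exact (max_eq_right (neg_le.1 hn)).symm

theorem nullMeasurableSet_bddAbove_range {ι : Type*} [Countable ι] {g : ι → α → ℝ}
    (hg : ∀ i, AEMeasurable (g i) μ) :
    NullMeasurableSet {x | BddAbove (Set.range fun i => g i x)} μ := by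
  refine (measurableSet_bddAbove_range fun i =>
    (hg i).measurable_mk).nullMeasurableSet.congr ?_
  filter_upwards [ae_all_iff.2 fun i => (hg i).ae_eq_mk] with x hx
  exact congrArg (fun u : ι → ℝ => BddAbove (Set.range u)) (funext hx).symm

theorem ae_bddAbove_range_birkhoffSum (hT : Ergodic T μ) (hf : Integrable f μ)
    (hneg : ∫ x, f x ∂μ < 0) : ∀ᵐ x ∂μ, BddAbove (Set.range fun n => birkhoffSum T f n x) := by
  have hTm := hT.toMeasurePreserving
  refine (hT.quasiErgodic.ae_mem_or_ae_notMem₀ (nullMeasurableSet_bddAbove_range fun n =>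
    (integrable_birkhoffSum hTm hf n).aemeasurable) (ae_of_all _ fun x =>
      propext (bddAbove_range_birkhoffSum_apply_iff T f x))).resolve_right fun hunbdd => ?_
  exact hneg.not_ge (integral_nonneg_of_ae_not_bddAbove_birkhoffSum hTm hf hunbdd)

variable [IsProbabilityMeasure μ]

theorem ae_eventually_birkhoffAverage_lt (hT : Ergodic T μ) (hf : Integrable f μ) {c : ℝ}
    (hc : ∫ x, f x ∂μ < c) : ∀ᵐ x ∂μ, ∀ᶠ n in atTop, birkhoffAverage ℝ T f n x < c := by
  obtain ⟨b, hfb, hbc⟩ := exists_between hc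
  have hneg : ∫ x, (f x - b) ∂μ < 0 := by
    rw [integral_sub hf (integrable_const b)]
    simpa using hfb
  filter_upwards [ae_bddAbove_range_birkhoffSum hT (hf.sub (integrable_const b)) hneg]
    with x ⟨C, hC⟩
  have hlim : Tendsto (fun n : ℕ => C / n + b) atTop (𝓝 b) := by
    simpa using (tendsto_const_div_atTop_nhds_zero_nat C).add_const b
  filter_upwards [hlim.eventually_lt_const hbc, eventually_gt_atTop 0] with n hn hn0
  refine lt_of_le_of_lt ?_ hn
  have hCn : birkhoffSum T f n x - n * b ≤ C := by
    simpa [birkhoffSum_sub, birkhoffSum] using hC ⟨n, rfl⟩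
  rw [birkhoffAverage, smul_eq_mul, inv_mul_le_iff₀ (by positivity)]
  field_simp
  linarith

theorem ae_tendsto_birkhoffAverage (hT : Ergodic T μ) (hf : Integrable f μ) :
    ∀ᵐ x ∂μ, Tendsto (birkhoffAverage ℝ T f · x) atTop (𝓝 (∫ x, f x ∂μ)) := by
  have upper (q : ℚ) : ∀ᵐ x ∂μ, ∫ x, f x ∂μ < q →
      ∀ᶠ n in atTop, birkhoffAverage ℝ T f n x < q :=
    eventually_imp_distrib_left.2 (ae_eventually_birkhoffAverage_lt hT hf)
  have lower (q : ℚ) : ∀ᵐ x ∂μ, q < ∫ x, f x ∂μ →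
      ∀ᶠ n in atTop, q < birkhoffAverage ℝ T f n x := by
    refine eventually_imp_distrib_left.2 fun hq => ?_
    have hq' : ∫ x, (-f) x ∂μ < -q := by simpa [integral_neg] using hq
    filter_upwards [ae_eventually_birkhoffAverage_lt hT hf.neg hq'] with x hx
    simpa [birkhoffAverage_neg] using hx
  filter_upwards [ae_all_iff.2 upper, ae_all_iff.2 lower] with x hupper hlower
  refine tendsto_order.2 ⟨fun b hb => ?_, fun b hb => ?_⟩
  · obtain ⟨q, hbq, hq⟩ := exists_rat_btwn hb
    exact (hlower q hq).mono fun n => hbq.trans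
  · obtain ⟨q, hq, hqb⟩ := exists_rat_btwn hb
    exact (hupper q hq).mono fun n hn => hn.trans hqb

end BirkhoffErgodicTheorem

section ExponentialGrowth

open Asymptotics
open scoped Topology

variable {E F : Type*} [SeminormedAddCommGroup E] [NormedAddCommGroup F]

/-- `ExpGrowthLE a l` says that the exponential growth rate `limsup (1/n) log ‖a n‖` of `a` is at
most `l`. Stating it through the bounds `‖a n‖ = O(exp (b n))`, `b > l`, keeps it meaningful for
sequences that vanish, or whose growth rate is `-∞`. -/
def ExpGrowthLE (a : ℕ → E) (l : ℝ) : Prop :=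
  ∀ b, l < b → a =O[atTop] fun n => Real.exp (b * n)

/-- `a` has Lyapunov exponent `l`: the sequence `(1/n) log ‖a n‖` converges to `l`. Since
`Real.log 0 = 0`, this is meaningful only when `a` does not vanish. -/
def HasLyapunovExponent (a : ℕ → E) (l : ℝ) : Prop :=
  Tendsto (fun n : ℕ => (1 / n : ℝ) * Real.log ‖a n‖) atTop (𝓝 l)

namespace ExpGrowthLE

variable {a : ℕ → E} {b : ℕ → F} {l l' : ℝ}

theorem mono (ha : ExpGrowthLE a l) (hl : l ≤ l') : ExpGrowthLE a l' :=
  fun c hc => ha c (hl.trans_lt hc)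

theorem of_isBigO (hb : ExpGrowthLE b l) (hab : a =O[atTop] b) : ExpGrowthLE a l :=
  fun c hc => hab.trans (hb c hc)

theorem add {a' : ℕ → E} (ha : ExpGrowthLE a l) (ha' : ExpGrowthLE a' l) :
    ExpGrowthLE (fun n => a n + a' n) l :=
  fun c hc => (ha c hc).add (ha' c hc)

theorem smul_const {𝕜 : Type*} [NormedField 𝕜] [NormedSpace 𝕜 E] {c : ℕ → 𝕜}
    (hc : ExpGrowthLE c l) (v : E) : ExpGrowthLE (fun n => c n • v) l :=
  hc.of_isBigO (IsBigO.of_bound ‖v‖ (Eventually.of_forall fun n => by rw [norm_smul, mul_comm]))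

theorem mul {R : Type*} [SeminormedRing R] {a a' : ℕ → R} (ha : ExpGrowthLE a l)
    (ha' : ExpGrowthLE a' l') : ExpGrowthLE (fun n => a n * a' n) (l + l') := by
  intro c hc
  obtain ⟨ε, hε, hc⟩ : ∃ ε > 0, (l + ε) + (l' + ε) = c :=
    ⟨(c - (l + l')) / 2, by linarith, by ring⟩
  refine ((ha (l + ε) (by linarith)).mul (ha' (l' + ε) (by linarith))).congr_right fun n => ?_
  rw [← Real.exp_add, ← add_mul, hc]

theorem comp_succ (ha : ExpGrowthLE a l) : ExpGrowthLE (fun n => a (n + 1)) l := by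
  intro c hc
  refine ((ha c hc).comp_tendsto (tendsto_add_atTop_nat 1)).trans
    (IsBigO.of_bound (Real.exp c) (Eventually.of_forall fun n => le_of_eq ?_))
  rw [Function.comp_apply, Real.norm_eq_abs, Real.norm_eq_abs, Real.abs_exp, Real.abs_exp,
    ← Real.exp_add]
  push_cast
  ring_nf

theorem sum_range (ha : ExpGrowthLE a l) :
    ExpGrowthLE (fun n => ∑ j ∈ Finset.range n, a j) (max 0 l) := by
  intro c hc
  obtain ⟨hc0, hlc⟩ := max_lt_iff.1 hc
  obtain ⟨C, hC, hbound⟩ := bound_of_isBigO_nat_atTop (ha c hlc)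
  have one_lt_exp : 0 < Real.exp c - 1 := sub_pos.2 (Real.one_lt_exp_iff.2 hc0)
  refine IsBigO.of_bound (C / (Real.exp c - 1)) (Eventually.of_forall fun n => ?_)
  calc ‖∑ j ∈ Finset.range n, a j‖
    _ ≤ ∑ j ∈ Finset.range n, C * Real.exp c ^ j := norm_sum_le_of_le _ fun j _ => by
      simpa [← Real.exp_nat_mul, mul_comm c] using hbound (Real.exp_ne_zero (c * j))
    _ = C / (Real.exp c - 1) * (Real.exp c ^ n - 1) := by
      rw [← Finset.mul_sum, geom_sum_eq (sub_pos.1 one_lt_exp).ne']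
      ring
    _ ≤ C / (Real.exp c - 1) * ‖Real.exp (c * n)‖ := by
      rw [Real.norm_eq_abs, Real.abs_exp, mul_comm c, Real.exp_nat_mul]
      gcongr
      linarith

end ExpGrowthLE

namespace HasLyapunovExponent

variable {a : ℕ → E} {d : ℕ → F} {l : ℝ}

theorem expGrowthLE (ha : HasLyapunovExponent a l) : ExpGrowthLE a l := by
  intro c hc
  refine IsBigO.of_bound' ?_
  filter_upwards [ha.eventually_lt_const hc, eventually_gt_atTop 0] with n hn hn0
  rw [one_div, inv_mul_lt_iff₀ (by positivity)] at hn
  rw [Real.norm_eq_abs, Real.abs_exp, mul_comm c]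
  exact (Real.le_exp_log _).trans (Real.exp_le_exp.2 hn.le)

theorem inv {𝕜 : Type*} [NormedField 𝕜] {a : ℕ → 𝕜} (ha : HasLyapunovExponent a l) :
    HasLyapunovExponent (fun n => (a n)⁻¹) (-l) := by
  simpa [HasLyapunovExponent] using Tendsto.neg ha

theorem of_expGrowthLE_of_isBigO (ha : ExpGrowthLE a l) (hd : HasLyapunovExponent d l)
    (hd0 : ∀ n, d n ≠ 0) (hda : d =O[atTop] a) : HasLyapunovExponent a l := by
  have const_div (C : ℝ) : Tendsto (fun n : ℕ => (1 / n : ℝ) * C) atTop (𝓝 0) := by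
    simpa using tendsto_one_div_atTop_nhds_zero_nat.mul_const C
  obtain ⟨C, hC, hdC⟩ := hda.exists_pos
  have ha0 : ∀ᶠ n in atTop, 0 < ‖a n‖ := by
    filter_upwards [hdC.bound] with n hn
    exact pos_of_mul_pos_right ((norm_pos_iff.2 (hd0 n)).trans_le hn) hC.le
  refine tendsto_order.2 ⟨fun b hb => ?_, fun b hb => ?_⟩
  · have lower := (Tendsto.sub hd (const_div (Real.log C)))
    rw [sub_zero] at lower
    filter_upwards [lower.eventually_const_lt hb, hdC.bound, ha0] with n hn hdn han
    refine hn.trans_le ?_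
    rw [← mul_sub]
    gcongr
    rw [sub_le_iff_le_add', ← Real.log_mul hC.ne' han.ne']
    exact Real.log_le_log (norm_pos_iff.2 (hd0 n)) hdn
  · obtain ⟨c, hlc, hcb⟩ := exists_between hb
    obtain ⟨K, hK, haK⟩ := (ha c hlc).exists_pos
    have upper := (const_div (Real.log K)).add_const c
    rw [zero_add] at upper
    filter_upwards [upper.eventually_lt_const hcb, haK.bound, ha0, eventually_gt_atTop 0]
      with n hn han han0 hn0
    refine lt_of_le_of_lt ?_ hn
    rw [Real.norm_eq_abs, Real.abs_exp] at han
    have hlog := Real.log_le_log han0 han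
    rw [Real.log_mul hK.ne' (Real.exp_ne_zero _), Real.log_exp] at hlog
    calc (1 / n : ℝ) * Real.log ‖a n‖
      _ ≤ (1 / n : ℝ) * (Real.log K + c * n) := by gcongr
      _ = (1 / n : ℝ) * Real.log K + c := by field_simp

end HasLyapunovExponent

end ExponentialGrowth

section UnitCircle

open MeasureTheory
open scoped Real Topology

theorem norm_e (k : ℝ) : ‖e k‖ = 1 := by
  rw [e, mul_right_comm, ← Complex.ofReal_ofNat, ← Complex.ofReal_mul, ← Complex.ofReal_mul,
    Complex.norm_exp_ofReal_mul_I]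

theorem toCircle_coe_eq_e (k : ℝ) : (AddCircle.toCircle (k : UnitAddCircle) : ℂ) = e k := by
  rw [AddCircle.toCircle_apply_mk, Circle.coe_exp, e]
  congr 1
  push_cast
  ring

theorem circleMap_eq_e (k : ℝ) : circleMap 0 1 (2 * π * k) = e k := by
  simp [circleMap, e, mul_right_comm]

theorem integral_comp_toCircle (g : ℂ → ℝ) :
    ∫ x : UnitAddCircle, g x.toCircle = Real.circleAverage g 0 1 := by
  have rescale := intervalIntegral.smul_integral_comp_mul_left (a := 0) (b := 1)
    (fun θ => g (circleMap 0 1 θ)) (2 * π)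
  rw [mul_zero, mul_one] at rescale
  rw [Real.circleAverage, ← rescale, smul_smul, inv_mul_cancel₀ (by positivity), one_smul,
    ← UnitAddCircle.intervalIntegral_preimage 0, zero_add]
  exact intervalIntegral.integral_congr fun k _ => by simp only [circleMap_eq_e, toCircle_coe_eq_e]

theorem integrable_comp_toCircle {g : ℂ → ℝ} (hg : Measurable g)
    (hgi : CircleIntegrable g 0 1) : Integrable fun x : UnitAddCircle => g x.toCircle := by
  have hmeas : Measurable fun x : UnitAddCircle => g x.toCircle :=
    hg.comp (continuous_subtype_val.comp AddCircle.continuous_toCircle).measurable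
  rw [← (UnitAddCircle.measurePreserving_mk 0).integrable_comp hmeas.aestronglyMeasurable, zero_add]
  have rescale : IntervalIntegrable (fun k => g (e k)) volume 0 1 := by
    simpa [circleMap_eq_e, Real.pi_ne_zero] using
      IntervalIntegrable.comp_mul_left (c := 2 * π) hgi
  refine ((intervalIntegrable_iff_integrableOn_Ioc_of_le zero_le_one).1 rescale).congr ?_
  exact ae_of_all _ fun k => congrArg g (toCircle_coe_eq_e k).symm

theorem integrable_log_norm_eval_toCircle (p : ℂ[X]) :
    Integrable fun x : UnitAddCircle => Real.log ‖p.eval (x.toCircle : ℂ)‖ :=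
  integrable_comp_toCircle (g := fun z => Real.log ‖p.eval z‖) (by fun_prop)
    p.intervalIntegrable_mahlerMeasure

theorem ae_toCircle_notMem {s : Set ℂ} (hs : s.Finite) :
    ∀ᵐ x : UnitAddCircle, (x.toCircle : ℂ) ∉ s := by
  have toCircle_injective : Function.Injective fun x : UnitAddCircle => (x.toCircle : ℂ) :=
    Circle.coe_injective.comp (AddCircle.injective_toCircle one_ne_zero)
  have : NullSingletonClass (volume : Measure UnitAddCircle) :=
    ⟨fun x => by simpa using AddCircle.volume_closedBall (T := 1) (x := x) 0⟩
  exact measure_eq_zero_iff_ae_notMem.1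
    ((hs.preimage toCircle_injective.injOn).measure_zero volume)

theorem ae_coe_of_ae_unitAddCircle {P : UnitAddCircle → Prop} (h : ∀ᵐ x, P x) :
    ∀ᵐ k : ℝ, P k := by
  rw [← Measure.restrict_univ (μ := volume), ← iUnion_Ioc_intCast, ae_restrict_iUnion_eq,
    eventually_iSup]
  exact fun n => (UnitAddCircle.measurePreserving_mk n).quasiMeasurePreserving.ae h

theorem iterate_nsmul_coe_unitAddCircle (L n : ℕ) (k : ℝ) :
    (fun y : UnitAddCircle => L • y)^[n] k = ((L ^ n * k : ℝ) : UnitAddCircle) := by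
  rw [smul_iterate_apply, ← AddCircle.coe_nsmul, nsmul_eq_mul, Nat.cast_pow]

theorem ae_eval_e_pow_mul_ne_zero {L : ℕ} (hL : 2 ≤ L) {p : ℂ[X]} (hp : p ≠ 0) :
    ∀ᵐ k : ℝ, ∀ n : ℕ, p.eval (e (L ^ n * k)) ≠ 0 := by
  have hT : Ergodic fun y : UnitAddCircle => L • y := AddCircle.ergodic_nsmul hL
  refine ae_all_iff.2 fun n => ?_
  have h := ae_coe_of_ae_unitAddCircle
    ((hT.toMeasurePreserving.iterate n).quasiMeasurePreserving.ae
      (ae_toCircle_notMem (finite_setOfPred_isRoot hp)))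
  simpa only [Set.mem_ofPred_eq, IsRoot.def, iterate_nsmul_coe_unitAddCircle,
    toCircle_coe_eq_e] using h

theorem ae_tendsto_average_log_norm_eval {L : ℕ} (hL : 2 ≤ L) (p : ℂ[X]) :
    ∀ᵐ k : ℝ, Tendsto (fun n : ℕ => (1 / n : ℝ) *
        ∑ j ∈ Finset.range n, Real.log ‖p.eval (e (L ^ j * k))‖)
      atTop (𝓝 p.logMahlerMeasure) := by
  have hT : Ergodic fun y : UnitAddCircle => L • y := AddCircle.ergodic_nsmul hL
  have : IsProbabilityMeasure (volume : Measure UnitAddCircle) := ⟨UnitAddCircle.measure_univ⟩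
  have h := ae_coe_of_ae_unitAddCircle
    (ae_tendsto_birkhoffAverage hT (integrable_log_norm_eval_toCircle p))
  rw [integral_comp_toCircle fun z => Real.log ‖p.eval z‖, ← logMahlerMeasure_def] at h
  simpa only [birkhoffAverage, birkhoffSum, iterate_nsmul_coe_unitAddCircle, toCircle_coe_eq_e,
    smul_eq_mul, one_div] using h

end UnitCircle

section ExponentOfProducts

open MeasureTheory Asymptotics

theorem isBigO_eval_e (p : ℂ[X]) (x : ℕ → ℝ) :
    (fun n => p.eval (e (x n))) =O[atTop] fun _ => (1 : ℂ) := by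
  obtain ⟨C, hC⟩ := (isCompact_sphere (0 : ℂ) 1).exists_bound_of_continuousOn p.continuousOn
  refine IsBigO.of_bound C (Eventually.of_forall fun n => ?_)
  simpa using hC _ (mem_sphere_zero_iff_norm.2 (norm_e (x n)))

theorem ae_hasLyapunovExponent_prod_eval {L : ℕ} (hL : 2 ≤ L) {p : ℂ[X]} (hp : p ≠ 0) :
    ∀ᵐ k : ℝ, HasLyapunovExponent
      (fun n => ∏ j ∈ Finset.range n, p.eval (e (L ^ j * k))) p.logMahlerMeasure := by
  filter_upwards [ae_eval_e_pow_mul_ne_zero hL hp, ae_tendsto_average_log_norm_eval hL p]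
    with k hne hlim
  refine hlim.congr fun n => ?_
  rw [norm_prod, Real.log_prod fun j _ => norm_ne_zero_iff.2 (hne j)]

theorem logMahlerMeasure_geom_sum {L : ℕ} (hL : L ≠ 0) :
    (∑ i ∈ Finset.range L, (X : ℂ[X]) ^ i).logMahlerMeasure = 0 := by
  rw [logMahlerMeasure_eq_log_leadingCoeff_add_sum_log_roots,
    (monic_geom_sum_X hL).leadingCoeff, norm_one, Real.log_one, zero_add]
  refine Multiset.sum_eq_zero fun y hy => ?_
  obtain ⟨z, hz, rfl⟩ := Multiset.mem_map.1 hy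
  have root : ∑ i ∈ Finset.range L, z ^ i = 0 := by
    simpa [eval_finsetSum] using isRoot_of_mem_roots hz
  have pow_eq_one : z ^ L = 1 := by
    rw [← sub_eq_zero, ← geom_sum_mul, root, zero_mul]
  simp [Complex.norm_eq_one_of_pow_eq_one pow_eq_one hL]

end ExponentOfProducts

section StrictLandau

open MeasureTheory Finset

theorem eval_reverse_map_conj (p : ℂ[X]) {z : ℂ} (hz : ‖z‖ = 1) :
    (p.map (starRingEnd ℂ)).reverse.eval z = starRingEnd ℂ (p.eval z) * z ^ p.natDegree := by
  have hz0 : z ≠ 0 := norm_ne_zero_iff.1 (by rw [hz]; exact one_ne_zero)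
  let _ : Invertible z⁻¹ := invertibleOfNonzero (inv_ne_zero hz0)
  have h := eval₂_reverse_mul_pow (RingHom.id ℂ) z⁻¹ (p.map (starRingEnd ℂ))
  rw [natDegree_map, invOf_eq_inv, inv_inv, eval₂_id, eval₂_id, Complex.inv_eq_conj hz,
    eval_map_apply] at h
  rw [← h, ← Complex.inv_eq_conj hz, mul_assoc, ← mul_pow, inv_mul_cancel₀ hz0, one_pow, mul_one]

/- On the unit circle `conj z = z⁻¹`, so where `|p|² = c` the product of `p` with its conjugate
reversal is the monomial `c X ^ n`, and `p` is then a monomial as well. -/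
theorem card_support_le_one_of_sq_norm_eval_eq {p : ℂ[X]} {c : ℝ}
    (h : {z : ℂ | ‖z‖ = 1 ∧ ‖p.eval z‖ ^ 2 = c}.Infinite) : #p.support ≤ 1 := by
  rcases eq_or_ne p 0 with rfl | hp
  · simp
  have mul_reverse : p * (p.map (starRingEnd ℂ)).reverse = C (c : ℂ) * X ^ p.natDegree := by
    refine eq_of_infinite_eval_eq _ _ (h.mono ?_)
    rintro z ⟨hz, hpz⟩
    rw [Set.mem_ofPred_eq, eval_mul, eval_reverse_map_conj p hz, ← mul_assoc, Complex.mul_conj,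
      Complex.normSq_eq_norm_sq, hpz, eval_mul, eval_C, eval_pow, eval_X]
  have hrev : (p.map (starRingEnd ℂ)).reverse ≠ 0 := by
    simpa [reverse_eq_zero] using hp
  have trailing_eq : p.natTrailingDegree = p.natDegree := by
    have hmul := mul_ne_zero hp hrev
    have hadd := natTrailingDegree_mul hp hrev
    rw [mul_reverse, C_mul_X_pow_eq_monomial] at hmul hadd
    rw [natTrailingDegree_monomial fun h0 => hmul (by rw [h0, monomial_zero_right]),
      natTrailingDegree_reverse, add_zero] at hadd
    exact hadd.symm
  refine card_le_one.2 fun i hi j hj => ?_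
  have := natTrailingDegree_le_of_mem_supp i hi
  have := natTrailingDegree_le_of_mem_supp j hj
  have := le_natDegree_of_mem_supp i hi
  have := le_natDegree_of_mem_supp j hj
  omega

theorem ae_exp_two_mul_log_norm_eval_toCircle {p : ℂ[X]} (hp : p ≠ 0) :
    ∀ᵐ x : UnitAddCircle, Real.exp (2 * Real.log ‖p.eval (x.toCircle : ℂ)‖) =
      ‖p.eval (x.toCircle : ℂ)‖ ^ 2 := by
  filter_upwards [ae_toCircle_notMem (finite_setOfPred_isRoot hp)] with x hx
  rw [two_mul, Real.exp_add, Real.exp_log (norm_pos_iff.2 hx), sq]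

theorem mahlerMeasure_lt_sqrt_sum_sq_norm_coeff {p : ℂ[X]} (hp : 1 < #p.support) :
    p.mahlerMeasure < √(∑ i ∈ p.support, ‖p.coeff i‖ ^ 2) := by
  have hp0 : p ≠ 0 := by
    rintro rfl
    simp at hp
  have : IsProbabilityMeasure (volume : Measure UnitAddCircle) := ⟨UnitAddCircle.measure_univ⟩
  set f : UnitAddCircle → ℝ := fun x => 2 * Real.log ‖p.eval (x.toCircle : ℂ)‖
  have exp_f : (fun x => Real.exp (f x)) =ᵐ[volume] fun x => ‖p.eval (x.toCircle : ℂ)‖ ^ 2 :=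
    ae_exp_two_mul_log_norm_eval_toCircle hp0
  have integrable_exp_f : Integrable fun x => Real.exp (f x) :=
    (integrable_comp_toCircle (g := fun z => ‖p.eval z‖ ^ 2) (by fun_prop)
      (ContinuousOn.circleIntegrable' (by fun_prop))).congr exp_f.symm
  rcases strictConvexOn_exp.ae_eq_const_or_map_average_lt Real.continuousOn_exp isClosed_univ
    (ae_of_all _ fun _ => Set.mem_univ _) ((integrable_log_norm_eval_toCircle p).const_mul 2)
    integrable_exp_f with hconst | hlt
  · refine absurd (card_support_le_one_of_sq_norm_eval_eq (c := Real.exp (⨍ x, f x)) ?_) hp.not_ge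
    intro hfin
    obtain ⟨x, hx, hexp, hfx⟩ := ((ae_toCircle_notMem hfin).and (exp_f.and hconst)).exists
    exact hx ⟨Circle.norm_coe _, hexp.symm.trans (congrArg Real.exp hfx)⟩
  · have integral_f : ∫ x, f x = 2 * p.logMahlerMeasure := by
      rw [integral_const_mul, integral_comp_toCircle fun z => Real.log ‖p.eval z‖,
        logMahlerMeasure_def]
    have integral_exp_f : ∫ x, Real.exp (f x) = ∑ i ∈ p.support, ‖p.coeff i‖ ^ 2 := by
      rw [integral_congr_ae exp_f, integral_comp_toCircle fun z => ‖p.eval z‖ ^ 2,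
        sum_sq_norm_coeff_eq_circleAverage]
    rw [average_eq_integral, average_eq_integral, integral_f, integral_exp_f] at hlt
    rw [mahlerMeasure_def_of_ne_zero hp0, Real.lt_sqrt (Real.exp_nonneg _), ← Real.exp_nat_mul]
    exact_mod_cast hlt

theorem logMahlerMeasure_lt_log_sqrt {L : ℕ} (hL : 2 ≤ L) {p : ℂ[X]} (hdeg : p.natDegree < L)
    (hcoeff : ∀ i, ‖p.coeff i‖ ≤ 1) : p.logMahlerMeasure < Real.log √L := by
  have sum_le_card : ∑ i ∈ p.support, ‖p.coeff i‖ ^ 2 ≤ #p.support :=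
    (sum_le_card_nsmul _ _ 1 fun i _ => pow_le_one₀ (norm_nonneg _) (hcoeff i)).trans_eq (by simp)
  have card_le : #p.support ≤ L := (card_supp_le_succ_natDegree p).trans hdeg
  rw [logMahlerMeasure_eq_log_MahlerMeasure]
  rcases le_or_gt #p.support 1 with hsupp | hsupp
  · calc Real.log p.mahlerMeasure
      _ ≤ 0 := Real.log_nonpos p.mahlerMeasure_nonneg <|
        p.mahlerMeasure_le_sqrt_sum_sq_norm_coeff.trans <|
          Real.sqrt_le_one.2 (sum_le_card.trans (mod_cast hsupp))
      _ < Real.log √L := Real.log_pos (Real.lt_sqrt_of_sq_lt (by norm_cast))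
  · have hp0 : p ≠ 0 := by rintro rfl; simp at hsupp
    refine Real.log_lt_log (mahlerMeasure_pos_of_ne_zero hp0)
      ((mahlerMeasure_lt_sqrt_sum_sq_norm_coeff hsupp).trans_le ?_)
    exact Real.sqrt_le_sqrt (sum_le_card.trans (mod_cast card_le))

end StrictLandau

section BiEigenMatrix

/-- The general `2 × 2` matrix with left eigenvector `(1, 1)` of eigenvalue `s` and right
eigenvector `(1, -1)` of eigenvalue `d`; the remaining parameter `t` is its lower left entry. The
Fourier matrices are of this form, and they are multiplied as triangular matrices. -/
def biEigenMatrix (s t d : ℂ) : Matrix (Fin 2) (Fin 2) ℂ :=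
  !![s - t, s - t - d; t, t + d]

theorem biEigenMatrix_mul (s t d s' t' d' : ℂ) :
    biEigenMatrix s t d * biEigenMatrix s' t' d' =
      biEigenMatrix (s * s') (t * s' + d * t') (d * d') := by
  rw [biEigenMatrix, biEigenMatrix, biEigenMatrix, Matrix.mul_fin_two]
  congr 1
  ext i j
  fin_cases i <;> fin_cases j <;> simp <;> ring

theorem biEigenMatrix_one_zero_one : biEigenMatrix 1 0 1 = 1 := by
  rw [biEigenMatrix, Matrix.one_fin_two]
  congr <;> ring

theorem biEigenMatrix_inv {s d : ℂ} (hs : s ≠ 0) (hd : d ≠ 0) (t : ℂ) :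
    (biEigenMatrix s t d)⁻¹ = biEigenMatrix s⁻¹ (-(t * (s⁻¹ * d⁻¹))) d⁻¹ := by
  refine Matrix.inv_eq_right_inv ?_
  rw [biEigenMatrix_mul, mul_inv_cancel₀ hs, mul_inv_cancel₀ hd, ← biEigenMatrix_one_zero_one]
  congr
  field_simp
  ring

theorem prod_map_range_biEigenMatrix {s : ℕ → ℂ} (hs : ∀ n, s n ≠ 0) (t d : ℕ → ℂ) (n : ℕ) :
    ((List.range n).map fun j => biEigenMatrix (s j) (t j) (d j)).prod =
      biEigenMatrix (∏ j ∈ Finset.range n, s j)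
        ((∏ j ∈ Finset.range n, s j) * ∑ j ∈ Finset.range n,
          (∏ i ∈ Finset.range j, d i) * (∏ i ∈ Finset.range (j + 1), s i)⁻¹ * t j)
        (∏ j ∈ Finset.range n, d j) := by
  induction n with
  | zero => simp [biEigenMatrix_one_zero_one]
  | succ n ih =>
    have hprod : ∏ j ∈ Finset.range n, s j ≠ 0 := Finset.prod_ne_zero_iff.2 fun j _ => hs j
    rw [List.prod_range_succ, ih, biEigenMatrix_mul, Finset.sum_range_succ, mul_add,
      Finset.prod_range_succ s, Finset.prod_range_succ d]
    congr 1
    field_simp [hs n]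

section LyapunovExponent

open Asymptotics
open scoped Matrix.Norms.L2Operator

theorem biEigenMatrix_eq_smul_add (s t d : ℂ) :
    biEigenMatrix s t d = s • !![1, 1; 0, 0] + t • !![-1, -1; 1, 1] + d • !![0, -1; 0, 1] := by
  rw [biEigenMatrix]
  ext i j
  fin_cases i <;> fin_cases j <;> simp [sub_eq_add_neg]

theorem norm_le_norm_biEigenMatrix_left (s t d : ℂ) : ‖s‖ ≤ ‖biEigenMatrix s t d‖ := by
  set V : Matrix (Fin 2) (Fin 2) ℂ := !![1, 1; 1, 1] with hV
  have hV0 : 0 < ‖V‖ := norm_pos_iff.2 fun h => by simpa [hV] using congrFun₂ h 0 0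
  have eigen : V * biEigenMatrix s t d = s • V := by
    rw [hV, biEigenMatrix, Matrix.mul_fin_two, Matrix.smul_of]
    simp
  refine le_of_mul_le_mul_left ?_ hV0
  rw [mul_comm, ← norm_smul, ← eigen]
  exact norm_mul_le _ _

theorem norm_le_norm_biEigenMatrix_right (s t d : ℂ) : ‖d‖ ≤ ‖biEigenMatrix s t d‖ := by
  set V : Matrix (Fin 2) (Fin 2) ℂ := !![1, 1; -1, -1] with hV
  have hV0 : 0 < ‖V‖ := norm_pos_iff.2 fun h => by simpa [hV] using congrFun₂ h 0 0
  have eigen : biEigenMatrix s t d * V = d • V := by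
    rw [hV, biEigenMatrix, Matrix.mul_fin_two, Matrix.smul_of]
    simp
  refine le_of_mul_le_mul_right ?_ hV0
  rw [← norm_smul, ← eigen]
  exact norm_mul_le _ _

variable {S T D s t d : ℕ → ℂ} {σ δ : ℝ}

theorem hasLyapunovExponent_biEigenMatrix (hS : HasLyapunovExponent S σ) (hS0 : ∀ n, S n ≠ 0)
    (hD : HasLyapunovExponent D δ) (hD0 : ∀ n, D n ≠ 0) (hT : ExpGrowthLE T (max σ δ)) :
    HasLyapunovExponent (fun n => biEigenMatrix (S n) (T n) (D n)) (max σ δ) := by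
  have growth : ExpGrowthLE (fun n => biEigenMatrix (S n) (T n) (D n)) (max σ δ) := by
    simp only [biEigenMatrix_eq_smul_add]
    exact (((hS.expGrowthLE.mono (le_max_left σ δ)).smul_const _).add (hT.smul_const _)).add
      ((hD.expGrowthLE.mono (le_max_right σ δ)).smul_const _)
  rcases max_choice σ δ with hmax | hmax <;> rw [hmax] at growth ⊢
  · exact .of_expGrowthLE_of_isBigO growth hS hS0
      (isBigO_of_le _ fun n => norm_le_norm_biEigenMatrix_left (S n) _ _)
  · exact .of_expGrowthLE_of_isBigO growth hD hD0
      (isBigO_of_le _ fun n => norm_le_norm_biEigenMatrix_right _ _ (D n))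

theorem hasLyapunovExponent_biEigenMatrix_inv (hS : HasLyapunovExponent S σ) (hS0 : ∀ n, S n ≠ 0)
    (hD : HasLyapunovExponent D δ) (hD0 : ∀ n, D n ≠ 0) (hT : ExpGrowthLE T (max σ δ)) :
    HasLyapunovExponent (fun n => (biEigenMatrix (S n) (T n) (D n))⁻¹) (max (-σ) (-δ)) := by
  simp only [biEigenMatrix_inv (hS0 _) (hD0 _)]
  refine hasLyapunovExponent_biEigenMatrix hS.inv (fun n => inv_ne_zero (hS0 n)) hD.inv
    (fun n => inv_ne_zero (hD0 n)) ?_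
  have growth := (hT.mul (hS.inv.expGrowthLE.mul hD.inv.expGrowthLE)).mono
    (l' := max (-σ) (-δ)) (by rcases max_cases σ δ with h | h <;> grind)
  exact growth.of_isBigO (isBigO_refl _ _).neg_left

theorem expGrowthLE_prod_mul_sum
    (hS : HasLyapunovExponent (fun n => ∏ j ∈ Finset.range n, s j) σ)
    (hD : HasLyapunovExponent (fun n => ∏ j ∈ Finset.range n, d j) δ)
    (ht : t =O[atTop] fun _ => (1 : ℂ)) :
    ExpGrowthLE (fun n => (∏ j ∈ Finset.range n, s j) * ∑ j ∈ Finset.range n,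
      (∏ i ∈ Finset.range j, d i) * (∏ i ∈ Finset.range (j + 1), s i)⁻¹ * t j) (max σ δ) := by
  have summand := (isBigO_refl (fun n => (∏ j ∈ Finset.range n, d j) *
    (∏ j ∈ Finset.range (n + 1), s j)⁻¹) atTop).mul ht
  simp only [mul_one] at summand
  have growth := (hD.expGrowthLE.mul hS.inv.expGrowthLE.comp_succ).of_isBigO summand
  refine (hS.expGrowthLE.mul growth.sum_range).mono ?_
  rw [← max_add_add_left, add_zero]
  simp

end LyapunovExponent

end BiEigenMatrix

section Substitution

open MeasureTheory

variable {L : ℕ}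

theorem coeff_posPoly (S : Finset (Fin L)) (i : ℕ) :
    (posPoly S).coeff i = if ∃ z ∈ S, (z : ℕ) = i then 1 else 0 := by
  simp only [posPoly, finsetSum_coeff, coeff_X_pow]
  split_ifs with h
  · obtain ⟨z, hz, rfl⟩ := h
    simp [Fin.val_inj, hz]
  · exact Finset.sum_eq_zero fun z hz => if_neg fun hi => h ⟨z, hz, hi.symm⟩

theorem norm_coeff_posPoly_sub_le (S T : Finset (Fin L)) (i : ℕ) :
    ‖(posPoly S - posPoly T).coeff i‖ ≤ 1 := by
  rw [coeff_sub, coeff_posPoly, coeff_posPoly]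
  split_ifs <;> simp

theorem natDegree_posPoly_lt (hL : 0 < L) (S : Finset (Fin L)) : (posPoly S).natDegree < L :=
  (natDegree_sum_le_of_forall_le S _ fun z _ =>
    (natDegree_X_pow_le _).trans (Nat.le_pred_of_lt z.2)).trans_lt (Nat.pred_lt hL.ne')

theorem logMahlerMeasure_posPoly_sub_lt (hL : 2 ≤ L) (S T : Finset (Fin L)) :
    (posPoly S - posPoly T).logMahlerMeasure < Real.log √L := by
  have hL0 : 0 < L := by lia
  exact logMahlerMeasure_lt_log_sqrt hL ((natDegree_sub_le _ _).trans_lt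
    (max_lt (natDegree_posPoly_lt hL0 S) (natDegree_posPoly_lt hL0 T)))
    (norm_coeff_posPoly_sub_le S T)

theorem sum_posPoly_eq_geom_sum (wa wb : Fin L → Fin 2) :
    posPoly (Ca wa wb) + posPoly (Cb wa wb) + posPoly (Pa wa wb) + posPoly (Pb wa wb) =
      ∑ i ∈ Finset.range L, X ^ i := by
  rw [← Fin.sum_univ_eq_sum_range]
  simp only [posPoly, Ca, Cb, Pa, Pb, Finset.sum_filter, ← Finset.sum_add_distrib]
  refine Finset.sum_congr rfl fun i _ => ?_
  generalize wa i = x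
  generalize wb i = y
  fin_cases x <;> fin_cases y <;> simp

theorem FourierB_eq_biEigenMatrix (wa wb : Fin L → Fin 2) (k : ℝ) :
    FourierB wa wb k = biEigenMatrix ((∑ i ∈ Finset.range L, X ^ i : ℂ[X]).eval (e k))
      ((posPoly (Cb wa wb) + posPoly (Pb wa wb)).eval (e k))
      ((posPoly (Pa wa wb) - posPoly (Pb wa wb)).eval (e k)) := by
  rw [← sum_posPoly_eq_geom_sum wa wb, FourierB, biEigenMatrix]
  congr 1
  ext i j
  fin_cases i <;> fin_cases j <;> simp <;> ring

theorem opNorm_eq_norm (M : Matrix (Fin 2) (Fin 2) ℂ) :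
    open scoped Matrix.Norms.L2Operator in opNorm M = ‖M‖ :=
  rfl

open scoped Matrix.Norms.L2Operator in
theorem ae_hasLyapunovExponent_cocycleProd (hL : 2 ≤ L) (wa wb : Fin L → Fin 2)
    (hQR : posPoly (Pa wa wb) ≠ posPoly (Pb wa wb)) :
    ∀ᵐ k : ℝ,
      HasLyapunovExponent (cocycleProd wa wb k)
        (max 0 (posPoly (Pa wa wb) - posPoly (Pb wa wb)).logMahlerMeasure) ∧
      HasLyapunovExponent (fun n => (cocycleProd wa wb k n)⁻¹)
        (max 0 (-(posPoly (Pa wa wb) - posPoly (Pb wa wb)).logMahlerMeasure)) := by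
  have hL0 : L ≠ 0 := by lia
  have hs : (∑ i ∈ Finset.range L, (X : ℂ[X]) ^ i) ≠ 0 := (monic_geom_sum_X hL0).ne_zero
  have hd : posPoly (Pa wa wb) - posPoly (Pb wa wb) ≠ 0 := sub_ne_zero.2 hQR
  filter_upwards [ae_eval_e_pow_mul_ne_zero hL hs, ae_eval_e_pow_mul_ne_zero hL hd,
    ae_hasLyapunovExponent_prod_eval hL hs, ae_hasLyapunovExponent_prod_eval hL hd]
    with k hs0 hd0 hS hD
  rw [logMahlerMeasure_geom_sum hL0] at hS
  have hT := expGrowthLE_prod_mul_sum hS hD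
    (isBigO_eval_e (posPoly (Cb wa wb) + posPoly (Pb wa wb)) fun n => L ^ n * k)
  have hS0 := fun n => Finset.prod_ne_zero_iff (s := Finset.range n).2 fun j _ => hs0 j
  have hD0 := fun n => Finset.prod_ne_zero_iff (s := Finset.range n).2 fun j _ => hd0 j
  have exponent := hasLyapunovExponent_biEigenMatrix hS hS0 hD hD0 hT
  have exponent_inv := hasLyapunovExponent_biEigenMatrix_inv hS hS0 hD hD0 hT
  rw [neg_zero] at exponent_inv
  simp only [← prod_map_range_biEigenMatrix hs0, ← FourierB_eq_biEigenMatrix]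
    at exponent exponent_inv
  exact ⟨exponent, exponent_inv⟩

end Substitution

/-- For a binary constant-length substitution of length `L ≥ 2` with `Q ≠ R`,
for Lebesgue-a.e. `k` both Lyapunov exponents of the outward cocycle are strictly positive;
in particular `log √L - lim (1/n) log ‖B(k)·B(Lk)⋯B(L^{n-1}k)‖ > 0`. -/
theorem binary_substitution_positive_Lyapunov_exponents
    (L : ℕ) (hL : 2 ≤ L) (wa wb : Fin L → Fin 2)
    (hQR : posPoly (Pa wa wb) ≠ posPoly (Pb wa wb)) :
    ∀ᵐ k : ℝ,
      ∃ χmin χmax : ℝ,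
        Tendsto (fun n : ℕ =>
            Real.log (Real.sqrt L) - (1 / n : ℝ) * Real.log (opNorm (cocycleProd wa wb k n)))
          atTop (nhds χmin) ∧
        Tendsto (fun n : ℕ =>
            Real.log (Real.sqrt L) + (1 / n : ℝ) * Real.log (opNorm ((cocycleProd wa wb k n)⁻¹)))
          atTop (nhds χmax) ∧
        0 < χmin ∧ 0 < χmax := by
  have hm := logMahlerMeasure_posPoly_sub_lt hL (Pa wa wb) (Pb wa wb)
  have hlog : 0 < Real.log √L := Real.log_pos <| by
    rw [Real.lt_sqrt zero_le_one, one_pow]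
    exact_mod_cast hL
  filter_upwards [ae_hasLyapunovExponent_cocycleProd hL wa wb hQR] with k ⟨exponent, exponent_inv⟩
  simp only [opNorm_eq_norm]
  exact ⟨_, _, exponent.const_sub _, exponent_inv.const_add _, sub_pos.2 (max_lt hlog hm),
    add_pos_of_pos_of_nonneg hlog (le_max_left _ _)⟩
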